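/- The subscheme of affine 12-space cut out by $X_{22}=X_{33}$, $Y_{22}=Y_{33}$, $X_{12}(Y_{11}-Y_{22}) = Y_{12}(X_{11}-X_{22})$, and $X_{13}(Y_{11}-Y_{22}) - Y_{13}(X_{11}-X_{22}) = X_{12}Y_{23} - X_{23}Y_{12}$ has dimension 8. -/

import Mathlib

open MvPolynomial

/-- The prime ideal of the coordinate subspace where the first `i` coordinates vanish. -/
noncomputable def flagChainIdeal (k : Type*) [Field k] (i : ℕ) : Ideal (MvPolynomial (Fin 12) k) :=
  RingHom.ker (aeval (R := k)
    (fun j : Fin 12 => if j.val < i then (0 : MvPolynomial (Fin 12) k) else X j))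

instance flagChainIdeal_isPrime (k : Type*) [Field k] (i : ℕ) : (flagChainIdeal k i).IsPrime :=
  RingHom.ker_isPrime _

lemma flagChainIdeal_lt (k : Type*) [Field k] (i : ℕ) (hi : i < 12) :
    flagChainIdeal k i < flagChainIdeal k (i + 1) := by
  refine lt_of_le_of_ne ?_ ?_
  · intro p hp
    simp only [flagChainIdeal, RingHom.mem_ker] at hp ⊢
    have hc : (aeval (R := k) (fun j : Fin 12 => if j.val < i + 1 then
          (0 : MvPolynomial (Fin 12) k) else X j)).comp
        (aeval (R := k) (fun j : Fin 12 => if j.val < i then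
          (0 : MvPolynomial (Fin 12) k) else X j)) =
        aeval (R := k) (fun j : Fin 12 => if j.val < i + 1 then
          (0 : MvPolynomial (Fin 12) k) else X j) := by
      apply MvPolynomial.algHom_ext
      intro j
      by_cases h : j.val < i
      · have h' : j.val < i + 1 := by omega
        simp [h]
        omega
      · simp [h]
    have := congrArg (fun f => f p) hc
    simp only [AlgHom.comp_apply] at this
    rw [← this, hp, map_zero]
  · intro h
    have h1 : (X ⟨i, hi⟩ : MvPolynomial (Fin 12) k) ∈ flagChainIdeal k (i + 1) := by
      simp [flagChainIdeal, RingHom.mem_ker]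
    rw [← h] at h1
    simp [flagChainIdeal, RingHom.mem_ker] at h1

lemma flagChainIdeal_height (k : Type*) [Field k] (i : ℕ) (hi : i ≤ 12) :
    (i : ℕ∞) ≤ (flagChainIdeal k i).height := by
  induction i with
  | zero => simp
  | succ n ih =>
    have h1 := Ideal.height_add_one_le_of_lt_of_isPrime (flagChainIdeal_lt k n (by omega))
    refine le_trans ?_ h1
    push_cast
    gcongr
    exact ih (by omega)

lemma flag_lower {k : Type*} [Field k] (s : Set (MvPolynomial (Fin 12) k))
    (hs : s ⊆ flagChainIdeal k 12) (hc : s.encard ≤ 4) :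
    8 ≤ ringKrullDim (MvPolynomial (Fin 12) k ⧸ Ideal.span s) := by
  have h1 := Ideal.height_le_ringKrullDim_quotient_add_encard s hs
  have h2 := flagChainIdeal_height k 12 le_rfl
  have h3 : (12 : WithBot ℕ∞) ≤
      ringKrullDim (MvPolynomial (Fin 12) k ⧸ Ideal.span s) + 4 := by
    refine le_trans ?_ (h1.trans ?_)
    · exact WithBot.coe_le_coe.2 h2
    · gcongr
      exact WithBot.coe_le_coe.2 hc
  generalize ringKrullDim (MvPolynomial (Fin 12) k ⧸ Ideal.span s) = d at h3
  induction d with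
  | bot => simp at h3
  | coe d =>
    induction d with
    | top => exact le_top
    | coe d =>
      norm_cast at h3 ⊢
      have h4 : (12 : ℕ) ≤ d + 4 := by exact_mod_cast h3
      have : (8 : ℕ) ≤ d := by omega
      exact_mod_cast this

/-- The quadric `x b - y a`. -/
noncomputable def flagQuadric (k : Type*) [Field k] : MvPolynomial (Fin 10) k :=
  X 2 * X 1 + -(X 3 * X 0)

lemma flagQuadric_prime (k : Type*) [Field k] : Prime (flagQuadric k) := by
  classical
  apply Irreducible.prime
  apply irreducible_mul_X_add
  · exact X_ne_zero _
  · simp [vars_X]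
  · rw [vars_neg]
    intro h
    have := vars_mul _ _ h
    simp [vars_X] at this
  · rw [IsRelPrime.neg_right_iff]
    have hp : Prime (X 2 : MvPolynomial (Fin 10) k) := X_prime
    rw [hp.irreducible.isRelPrime_iff_not_dvd]
    intro h
    rcases hp.dvd_or_dvd h with h | h <;> simp [X_dvd_X] at h

lemma flag_upper {k : Type*} [Field k] {S : Type*} [CommRing S]
    (ψ : MvPolynomial (Fin 10) k →+* S) (hψ : Function.Surjective ψ)
    (h3 : ψ (flagQuadric k) = 0)
    (h4 : ψ (X 4 * X 1 - X 5 * X 0 - (X 2 * X 7 - X 6 * X 3)) = 0) :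
    ringKrullDim S ≤ 8 := by
  have hp := flagQuadric_prime k
  have hprime : (Ideal.span {flagQuadric k}).IsPrime :=
    (Ideal.span_singleton_prime hp.ne_zero).2 hp
  have hle : ∀ a ∈ Ideal.span {flagQuadric k}, ψ a = 0 := by
    intro a ha
    obtain ⟨c, rfl⟩ := Ideal.mem_span_singleton.1 ha
    rw [map_mul, h3, zero_mul]
  have e1 := ringKrullDim_quotient_succ_le_of_nonZeroDivisor
    (mem_nonZeroDivisors_of_ne_zero hp.ne_zero)
  have e2 : ringKrullDim S + 1 ≤
      ringKrullDim (MvPolynomial (Fin 10) k ⧸ Ideal.span {flagQuadric k}) := by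
    refine ringKrullDim_succ_le_of_surjective (Ideal.Quotient.lift _ ψ hle)
      (Ideal.Quotient.lift_surjective_of_surjective _ _ hψ)
      (r := Ideal.Quotient.mk _ (X 4 * X 1 - X 5 * X 0 - (X 2 * X 7 - X 6 * X 3)))
      (mem_nonZeroDivisors_of_ne_zero ?_) ?_
    · intro h
      rw [Ideal.Quotient.eq_zero_iff_mem, Ideal.mem_span_singleton] at h
      obtain ⟨c, hc⟩ := h
      have := congrArg (eval (fun j : Fin 10 => if j = 4 ∨ j = 1 then (1 : k) else 0)) hc
      simp [flagQuadric] at this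
    · rw [Ideal.Quotient.lift_mk, h4]
  have e3 : ringKrullDim (MvPolynomial (Fin 10) k) = 10 := by
    rw [MvPolynomial.ringKrullDim_of_isNoetherianRing]
    simp
  rw [e3] at e1
  have e4 : ringKrullDim S + 1 + 1 ≤ 10 := le_trans (by gcongr) e1
  generalize ringKrullDim S = d at e4
  induction d with
  | bot => simp
  | coe d =>
    induction d with
    | top => exact absurd e4 (by decide)
    | coe d =>
      have h4 : d + 1 + 1 ≤ 10 := by
        have h5 : ((d : ℕ∞) + 1 + 1) ≤ (10 : ℕ) := WithBot.coe_le_coe.1 e4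
        exact_mod_cast h5
      have h6 : d ≤ 8 := by omega
      have h7 : (d : ℕ∞) ≤ (8 : ℕ) := by exact_mod_cast h6
      exact WithBot.coe_le_coe.2 h7

/-- The scheme `Flag_{x,x,y}` for `S = 𝔸²` has dimension 8. Variables `0,…,5` are
`X₁₁,X₁₂,X₁₃,X₂₂,X₂₃,X₃₃` and `6,…,11` are `Y₁₁,Y₁₂,Y₁₃,Y₂₂,Y₂₃,Y₃₃`. -/
theorem flag_xxy_dimension_eight {k : Type*} [Field k] [IsAlgClosed k] :
    ringKrullDim (MvPolynomial (Fin 12) k ⧸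
      Ideal.span ({X 3 - X 5,
                   X 9 - X 11,
                   X 1 * (X 6 - X 9) - X 7 * (X 0 - X 3),
                   X 2 * (X 6 - X 9) - X 8 * (X 0 - X 3) - (X 1 * X 10 - X 4 * X 7)} :
        Set (MvPolynomial (Fin 12) k))) = 8 := by
  apply le_antisymm
  · set s : Set (MvPolynomial (Fin 12) k) := {X 3 - X 5,
                   X 9 - X 11,
                   X 1 * (X 6 - X 9) - X 7 * (X 0 - X 3),
                   X 2 * (X 6 - X 9) - X 8 * (X 0 - X 3) - (X 1 * X 10 - X 4 * X 7)} with hs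
    let q : MvPolynomial (Fin 12) k →ₐ[k] MvPolynomial (Fin 12) k ⧸ Ideal.span s :=
      Ideal.Quotient.mkₐ k (Ideal.span s)
    have hq : ∀ p ∈ s, q p = 0 := fun p hp =>
      Ideal.Quotient.eq_zero_iff_mem.2 (Ideal.subset_span hp)
    have r1 := hq (X 3 - X 5) (by simp [hs])
    have r2 := hq (X 9 - X 11) (by simp [hs])
    have r3 := hq (X 1 * (X 6 - X 9) - X 7 * (X 0 - X 3)) (by simp [hs])
    have r4 := hq (X 2 * (X 6 - X 9) - X 8 * (X 0 - X 3) - (X 1 * X 10 - X 4 * X 7))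
      (by simp [hs])
    simp only [map_sub, map_mul] at r1 r2 r3 r4
    let v : Fin 10 → MvPolynomial (Fin 12) k ⧸ Ideal.span s :=
      ![q (X 0) - q (X 3), q (X 6) - q (X 9), q (X 1), q (X 7), q (X 2), q (X 8), q (X 4),
        q (X 10), q (X 3), q (X 9)]
    let ψ : MvPolynomial (Fin 10) k →ₐ[k] MvPolynomial (Fin 12) k ⧸ Ideal.span s := aeval v
    have hv : ∀ j, v j ∈ ψ.range := fun j => ⟨X j, by simp [ψ]⟩
    have hX : ∀ j, q (X j) ∈ ψ.range := by
      have a0 : q (X 0) - q (X 3) ∈ ψ.range := hv 0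
      have a1 : q (X 6) - q (X 9) ∈ ψ.range := hv 1
      have a8 : q (X 3) ∈ ψ.range := hv 8
      have a9 : q (X 9) ∈ ψ.range := hv 9
      intro j
      fin_cases j
      · simpa using add_mem a0 a8
      · exact hv 2
      · exact hv 4
      · exact a8
      · exact hv 6
      · exact (sub_eq_zero.1 r1) ▸ a8
      · simpa using add_mem a1 a9
      · exact hv 3
      · exact hv 5
      · exact a9
      · exact hv 7
      · exact (sub_eq_zero.1 r2) ▸ a9
    have hsurj : Function.Surjective ψ := by
      intro y
      obtain ⟨p, rfl⟩ := Ideal.Quotient.mk_surjective y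
      change q p ∈ ψ.range
      induction p using MvPolynomial.induction_on with
      | C a => exact (q.commutes a).symm ▸ ψ.range.algebraMap_mem a
      | add p p' h h' => rw [map_add]; exact add_mem h h'
      | mul_X p j h => rw [map_mul]; exact mul_mem h (hX j)
    refine flag_upper ψ.toRingHom hsurj ?_ ?_
    · change ψ _ = 0
      simp only [ψ, flagQuadric, map_add, map_neg, map_mul, aeval_X]
      change q (X 1) * (q (X 6) - q (X 9)) + -(q (X 7) * (q (X 0) - q (X 3))) = 0
      rw [← r3]; ring
    · change ψ _ = 0
      simp only [ψ, map_sub, map_mul, aeval_X]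
      exact r4
  · apply flag_lower
    · intro p hp
      simp only [Set.mem_insert_iff, Set.mem_singleton_iff] at hp
      rcases hp with rfl | rfl | rfl | rfl <;> simp [flagChainIdeal, RingHom.mem_ker]
    · refine (Set.encard_insert_le _ _).trans ?_
      refine (add_le_add_left (Set.encard_insert_le _ _) 1).trans ?_
      refine (add_le_add_left (add_le_add_left (Set.encard_insert_le _ _) 1) 1).trans ?_
      rw [Set.encard_singleton]
      norm_num
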